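/- Let r ≥ 1, let u ∈ ℝ^r be a nonzero vector, and let A ⊆ ℝ^r be a finite set such that (A,u) is in general position. Let S ⊆ A be a u-pierced simplex and let p ∈ A be a point lying strictly below S. Then there exists exactly one set S′ ⊆ S ∪ {p} with S′ ≠ S such that S′ is a u-pierced simplex; furthermore, this S′ contains p. -/

import Mathlib

/-- A set `S ⊆ ℝ^r` is `u`-pierced if its convex hull meets the line `ℝ·u`. -/
def PiercedU {r : ℕ} (u : Fin r → ℝ) (S : Set (Fin r → ℝ)) : Prop :=
  ∃ c : ℝ, c • u ∈ convexHull ℝ S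

/-- A `u`-pierced simplex `S` is non-degenerate: `S` is affinely independent,
no proper subset of `S` is `u`-pierced, and `u` is not a direction of the
affine hull of `S`. -/
def NonDegenerate {r : ℕ} (u : Fin r → ℝ) (S : Set (Fin r → ℝ)) : Prop :=
  AffineIndependent ℝ ((↑) : S → (Fin r → ℝ)) ∧
  (∀ S' : Set (Fin r → ℝ), S' ⊂ S → ¬ PiercedU u S') ∧
  u ∉ (affineSpan ℝ S).direction

/-- `p` lies strictly below `S`: for some normal vector `ν` with `⟨ν,u⟩ > 0` such
that the affine hull of `S` lies in the hyperplane `⟨ν,·⟩ = c`, one has `⟨ν,p⟩ < c`. -/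
def StrictlyBelow {r : ℕ} (u : Fin r → ℝ) (S : Set (Fin r → ℝ)) (p : Fin r → ℝ) : Prop :=
  ∃ ν : Fin r → ℝ, ∃ c : ℝ,
    0 < (∑ l : Fin r, ν l * u l) ∧ (∀ s ∈ S, (∑ l : Fin r, ν l * s l) = c) ∧
    (∑ l : Fin r, ν l * p l) < c

lemma pierced_iff {r : ℕ} (u : Fin r → ℝ) (T U : Finset (Fin r → ℝ)) (hTU : T ⊆ U) :
    PiercedU u (T : Set (Fin r → ℝ)) ↔ ∃ (w : (Fin r → ℝ) → ℝ) (t : ℝ), (∀ y, 0 ≤ w y) ∧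
      (∀ y, y ∉ T → w y = 0) ∧ ∑ y ∈ U, w y = 1 ∧ ∑ y ∈ U, w y • y = t • u := by
  classical
  unfold PiercedU
  constructor
  · rintro ⟨t, ht⟩
    rw [Finset.mem_convexHull'] at ht
    obtain ⟨w, h0, h1, h2⟩ := ht
    refine ⟨fun y => if y ∈ T then w y else 0, t, ?_, ?_, ?_, ?_⟩
    · intro y
      dsimp only
      split_ifs with h
      · exact h0 y h
      · exact le_rfl
    · intro y hy
      simp [hy]
    · rw [← h1, ← Finset.sum_subset hTU]
      · exact Finset.sum_congr rfl fun y hy => by simp [hy]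
      · intro y _ hy
        simp [hy]
    · rw [← h2, ← Finset.sum_subset hTU]
      · exact Finset.sum_congr rfl fun y hy => by simp [hy]
      · intro y _ hy
        simp [hy]
  · rintro ⟨w, t, h0, hz, h1, h2⟩
    refine ⟨t, ?_⟩
    rw [Finset.mem_convexHull']
    refine ⟨w, fun y _ => h0 y, ?_, ?_⟩
    · rw [← h1]
      exact Finset.sum_subset hTU fun y _ hy => hz y hy
    · rw [← h2]
      exact Finset.sum_subset hTU fun y _ hy => by simp [hz y hy]

lemma nondeg_inj {r : ℕ} (u : Fin r → ℝ) (hu : u ≠ 0) (S : Finset (Fin r → ℝ))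
    (hS : NonDegenerate u (S : Set (Fin r → ℝ))) (hne : S.Nonempty)
    (w : (Fin r → ℝ) → ℝ) (t : ℝ) (h0 : ∑ y ∈ S, w y = 0) (h1 : ∑ y ∈ S, w y • y = t • u) :
    t = 0 ∧ ∀ y ∈ S, w y = 0 := by
  obtain ⟨hai, -, hdir⟩ := hS
  obtain ⟨q, hq⟩ := hne
  have hmem : t • u ∈ (affineSpan ℝ (S : Set (Fin r → ℝ))).direction := by
    have : t • u = ∑ y ∈ S, w y • (y - q) := by
      simp only [smul_sub, Finset.sum_sub_distrib, ← Finset.sum_smul, h0, h1]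
      simp
    rw [this]
    refine Submodule.sum_mem _ fun y hy => Submodule.smul_mem _ _ ?_
    exact AffineSubspace.vsub_mem_direction
      (subset_affineSpan ℝ _ (Finset.mem_coe.2 hy)) (subset_affineSpan ℝ _ (Finset.mem_coe.2 hq))
  have ht : t = 0 := by
    by_contra ht
    exact hdir ((Submodule.smul_mem_iff _ ht).1 hmem)
  refine ⟨ht, fun y hy => ?_⟩
  rw [affineIndependent_iff] at hai
  have := hai (S.attach) (fun z => w z.1) (by
    rw [← h0]; exact Finset.sum_attach S w) (by
    have e : ∑ y ∈ S.attach, w y.1 • y.1 = ∑ y ∈ S, w y • y :=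
      Finset.sum_attach S (fun y => w y • y)
    rw [ht, zero_smul] at h1
    exact e.trans h1)
  exact this ⟨y, hy⟩ (Finset.mem_attach _ _)

lemma nondeg_surj {r : ℕ} (u : Fin r → ℝ) (hu : u ≠ 0) (S : Finset (Fin r → ℝ))
    (hS : NonDegenerate u (S : Set (Fin r → ℝ))) (hne : S.Nonempty) (hcard : S.card = r)
    (p : Fin r → ℝ) :
    ∃ (b : (Fin r → ℝ) → ℝ) (t : ℝ), ∑ y ∈ S, b y = 1 ∧ p = ∑ y ∈ S, b y • y + t • u := by
  classical
  let f : ((S → ℝ) × ℝ) →ₗ[ℝ] ((Fin r → ℝ) × ℝ) :=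
    { toFun := fun x => (∑ y : S, x.1 y • y.1 + x.2 • u, ∑ y : S, x.1 y)
      map_add' := by
        intro x y
        ext <;> simp [add_smul, Finset.sum_add_distrib]
        ring
      map_smul' := by
        intro c x
        ext <;> simp [Finset.mul_sum, mul_assoc] }
  have hinj : Function.Injective f := by
    rw [← LinearMap.ker_eq_bot, LinearMap.ker_eq_bot']
    rintro ⟨w, t⟩ hw
    have ha : ∑ y : S, w y • y.1 + t • u = 0 := congrArg Prod.fst hw
    have hb : ∑ y : S, w y = 0 := congrArg Prod.snd hw
    let w' : (Fin r → ℝ) → ℝ := fun y => if h : y ∈ S then w ⟨y, h⟩ else 0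
    have hw' : ∀ y : S, w' y = w y := fun y => by simp [w']
    obtain ⟨h1, h2⟩ := nondeg_inj u hu S hS hne w' (-t)
      (by rw [← hb, ← Finset.sum_coe_sort]; exact Finset.sum_congr rfl fun y _ => hw' y)
      (by
        rw [neg_smul, ← eq_neg_of_add_eq_zero_left ha, ← Finset.sum_coe_sort]
        exact Finset.sum_congr rfl fun y _ => by rw [hw' y])
    ext y
    · change w y = 0
      rw [← hw']; exact h2 y y.2
    · simpa using h1
  have hsurj : Function.Surjective f := by
    rw [← LinearMap.injective_iff_surjective_of_finrank_eq_finrank]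
    · exact hinj
    · simp [hcard]
  obtain ⟨⟨w, t⟩, hw⟩ := hsurj (p, 1)
  have ha : ∑ y : S, w y • y.1 + t • u = p := congrArg Prod.fst hw
  have hb : ∑ y : S, w y = 1 := congrArg Prod.snd hw
  refine ⟨fun y => if h : y ∈ S then w ⟨y, h⟩ else 0, t, ?_, ?_⟩
  · rw [← hb, ← Finset.sum_coe_sort]; exact Finset.sum_congr rfl fun y _ => by simp
  · rw [← ha]
    congr 1
    rw [← Finset.sum_coe_sort S]
    exact Finset.sum_congr rfl fun y _ => by simp

/-- pivoting at a pierced simplex `S` with a point `p` strictly below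
`S` yields a unique new pierced simplex `S' ⊆ S ∪ {p}`, `S' ≠ S`; moreover `p ∈ S'`. -/
theorem pivoting_step_exists_unique
    (r : ℕ) (hr : 1 ≤ r) (u : Fin r → ℝ) (hu : u ≠ 0)
    (A : Set (Fin r → ℝ)) (hA : A.Finite)
    (hgp : ∀ S : Set (Fin r → ℝ), S ⊆ A → PiercedU u S → S.ncard = r → NonDegenerate u S)
    (S : Set (Fin r → ℝ)) (hSA : S ⊆ A) (hS : PiercedU u S) (hcard : S.ncard = r)
    (p : Fin r → ℝ) (hpA : p ∈ A) (hbelow : StrictlyBelow u S p) :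
    ∃ S' : Set (Fin r → ℝ),
      (S' ⊆ S ∪ {p} ∧ S' ≠ S ∧ PiercedU u S' ∧ S'.ncard = r) ∧ p ∈ S' ∧
      ∀ S'' : Set (Fin r → ℝ),
        (S'' ⊆ S ∪ {p} ∧ S'' ≠ S ∧ PiercedU u S'' ∧ S''.ncard = r) → S'' = S' := by
  classical
  have hSfin : S.Finite := hA.subset hSA
  obtain ⟨S, rfl⟩ := hSfin.exists_finset_coe
  rw [Set.ncard_coe_finset] at hcard
  have hne : S.Nonempty := Finset.card_pos.1 (by omega)
  have hnd := hgp _ hSA hS (by rw [Set.ncard_coe_finset]; exact hcard)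
  have hpS : p ∉ S := by
    intro hp
    obtain ⟨ν, c, -, h1, h2⟩ := hbelow
    exact absurd (h1 p hp) h2.ne
  obtain ⟨b, t0, hb1, hbp⟩ := nondeg_surj u hu S hnd hne hcard p
  obtain ⟨a, c0, ha0, haz, ha1, hac⟩ := (pierced_iff u S S subset_rfl).1 hS
  have hapos : ∀ y ∈ S, 0 < a y := by
    intro y hy
    refine lt_of_le_of_ne (ha0 y) fun h => ?_
    refine hnd.2.1 ((S.erase y : Finset _) : Set (Fin r → ℝ)) ?_ ?_
    · exact_mod_cast Finset.erase_ssubset hy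
    · refine (pierced_iff u (S.erase y) S (Finset.erase_subset _ _)).2
        ⟨a, c0, ha0, fun z hz => ?_, ha1, hac⟩
      by_cases hzy : z = y
      · rw [hzy, ← h]
      · exact haz z fun hzS => hz (Finset.mem_erase.2 ⟨hzy, hzS⟩)
  -- the minimal ratio
  have hpos : (S.filter fun y => 0 < b y).Nonempty := by
    obtain ⟨y, hy, hby⟩ := Finset.exists_lt_of_sum_lt (s := S) (f := fun _ => (0:ℝ)) (g := b)
      (by simp [hb1])
    exact ⟨y, Finset.mem_filter.2 ⟨hy, hby⟩⟩
  obtain ⟨s0, hs0, hmin⟩ := Finset.exists_min_image _ (fun y => a y / b y) hpos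
  obtain ⟨hs0S, hbs0⟩ := Finset.mem_filter.1 hs0
  set m := a s0 / b s0 with hm
  have hmpos : 0 < m := div_pos (hapos _ hs0S) hbs0
  have hms0 : a s0 - m * b s0 = 0 := by rw [hm]; field_simp; ring
  have hfeas : ∀ y ∈ S, 0 ≤ a y - m * b y := by
    intro y hy
    by_cases hby : 0 < b y
    · have := hmin y (Finset.mem_filter.2 ⟨hy, hby⟩)
      rw [le_div_iff₀ hby] at this
      linarith
    · have := hapos y hy
      nlinarith [mul_nonneg hmpos.le (neg_nonneg.2 (not_lt.1 hby))]
  -- structure of piercing weights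
  have key : ∀ (w : (Fin r → ℝ) → ℝ) (t : ℝ), ∑ y ∈ insert p S, w y = 1 →
      ∑ y ∈ insert p S, w y • y = t • u → ∀ y ∈ S, w y = a y - w p * b y := by
    intro w t h1 h2 y hy
    rw [Finset.sum_insert hpS] at h1 h2
    have := (nondeg_inj u hu S hnd hne (fun y => w y + w p * b y - a y) (t - w p * t0 - c0)
      (by
        rw [Finset.sum_sub_distrib, Finset.sum_add_distrib, ← Finset.mul_sum, hb1, ha1]
        linarith)
      (by
        simp only [sub_smul, add_smul, mul_smul, Finset.sum_sub_distrib, Finset.sum_add_distrib,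
          ← Finset.smul_sum]
        rw [hac, ← h2]
        have : ∑ y ∈ S, b y • y = p - t0 • u := eq_sub_of_add_eq hbp.symm
        rw [this, smul_sub]
        abel)).2 y hy
    linarith
  have hss : ∀ z, (insert p S).erase z ⊆ insert p S := fun z => Finset.erase_subset _ _
  have hs0p : s0 ≠ p := fun h => hpS (h ▸ hs0S)
  have hpT : ∀ z ∈ S, p ∈ (insert p S).erase z := fun z hz =>
    Finset.mem_erase.2 ⟨fun h => hpS (h ▸ hz), Finset.mem_insert_self _ _⟩
  have hcardT : ∀ z ∈ S, ((insert p S).erase z).card = r := fun z hz => by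
    rw [Finset.card_erase_of_mem (Finset.mem_insert_of_mem hz), Finset.card_insert_of_notMem hpS]
    omega
  have hcoe : ((insert p S : Finset _) : Set (Fin r → ℝ)) = ↑S ∪ {p} := by
    ext x; simp [or_comm]
  refine ⟨(((insert p S).erase s0 : Finset _) : Set (Fin r → ℝ)), ⟨?_, ?_, ?_, ?_⟩, ?_, ?_⟩
  · rw [← hcoe]; exact_mod_cast hss s0
  · intro h
    rw [Finset.coe_inj] at h
    exact hpS (h ▸ hpT s0 hs0S)
  · refine (pierced_iff u _ _ (hss s0)).2
      ⟨fun y => if y = p then m else if y ∈ S then a y - m * b y else 0, c0 + m * t0,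
        ?_, ?_, ?_, ?_⟩
    · intro y
      dsimp only
      split_ifs with h h'
      · exact hmpos.le
      · exact hfeas y h'
      · exact le_rfl
    · intro y hy
      dsimp only
      have hyp : y ≠ p := fun h => hy (h ▸ hpT s0 hs0S)
      rw [if_neg hyp]
      split_ifs with h'
      · have : y = s0 := by
          by_contra hne'
          exact hy (Finset.mem_erase.2 ⟨hne', Finset.mem_insert_of_mem h'⟩)
        rw [this, hms0]
      · rfl
    · rw [Finset.sum_insert hpS]
      simp only [if_true]
      have : ∑ y ∈ S, (if y = p then m else if y ∈ S then a y - m * b y else 0)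
          = ∑ y ∈ S, (a y - m * b y) := Finset.sum_congr rfl fun y hy => by
        rw [if_neg (ne_of_mem_of_not_mem hy hpS), if_pos hy]
      rw [this, Finset.sum_sub_distrib, ← Finset.mul_sum, ha1, hb1]
      ring
    · rw [Finset.sum_insert hpS]
      simp only [if_true]
      have : ∑ y ∈ S, (if y = p then m else if y ∈ S then a y - m * b y else 0) • y
          = ∑ y ∈ S, (a y - m * b y) • y := Finset.sum_congr rfl fun y hy => by
        rw [if_neg (ne_of_mem_of_not_mem hy hpS), if_pos hy]
      rw [this]
      simp only [sub_smul, mul_smul, Finset.sum_sub_distrib, ← Finset.smul_sum]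
      have : ∑ y ∈ S, b y • y = p - t0 • u := eq_sub_of_add_eq hbp.symm
      rw [this, hac, smul_sub, add_smul, mul_smul]
      abel
  · rw [Set.ncard_coe_finset]; exact hcardT s0 hs0S
  · exact_mod_cast hpT s0 hs0S
  · rintro T ⟨hTsub, hTne, hTp, hTc⟩
    have hTA : T ⊆ A := hTsub.trans (Set.union_subset hSA (Set.singleton_subset_iff.2 hpA))
    have hTnd := hgp T hTA hTp hTc
    obtain ⟨T, rfl⟩ := (hA.subset hTA).exists_finset_coe
    rw [Set.ncard_coe_finset] at hTc
    rw [← hcoe, Finset.coe_subset] at hTsub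
    have hTneS : T ≠ S := fun h => hTne (by rw [h])
    -- T misses exactly one point
    obtain ⟨s1, hs1S, hs1T⟩ : ∃ s1 ∈ S, s1 ∉ T := by
      by_contra hcon
      push Not at hcon
      exact hTneS (Finset.eq_of_subset_of_card_le hcon (by omega)).symm
    have hTeq : T = (insert p S).erase s1 := by
      refine Finset.eq_of_subset_of_card_le ?_ (by rw [hcardT s1 hs1S, hTc])
      intro x hx
      exact Finset.mem_erase.2 ⟨fun h => hs1T (h ▸ hx), hTsub hx⟩
    obtain ⟨w, t, hw0, hwz, hw1, hw2⟩ := (pierced_iff u T _ hTsub).1 hTp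
    have hk := key w t hw1 hw2
    have h1 := hk s1 hs1S
    rw [hwz s1 hs1T] at h1
    have ha1' := hapos s1 hs1S
    have hwp := hw0 p
    have hb1' : 0 < b s1 := by
      by_contra hcon
      nlinarith [mul_nonneg hwp (neg_nonneg.2 (not_lt.1 hcon))]
    have hge : m ≤ w p := by
      have := hmin s1 (Finset.mem_filter.2 ⟨hs1S, hb1'⟩)
      rw [le_div_iff₀ hb1'] at this
      have : m * b s1 ≤ w p * b s1 := by linarith
      exact le_of_mul_le_mul_right this hb1'
    have h0 := hk s0 hs0S
    have hws0 : w s0 = 0 := by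
      have := hw0 s0
      nlinarith [mul_le_mul_of_nonneg_right hge hbs0.le]
    by_cases h01 : s1 = s0
    · rw [hTeq, h01]
    · exfalso
      have hs0T : s0 ∈ T := by
        rw [hTeq]
        exact Finset.mem_erase.2 ⟨fun h => h01 h.symm, Finset.mem_insert_of_mem hs0S⟩
      refine hTnd.2.1 ((T.erase s0 : Finset _) : Set (Fin r → ℝ)) ?_ ?_
      · exact_mod_cast Finset.erase_ssubset hs0T
      · refine (pierced_iff u (T.erase s0) _ ((Finset.erase_subset _ _).trans hTsub)).2
          ⟨w, t, hw0, fun z hz => ?_, hw1, hw2⟩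
        by_cases hzy : z = s0
        · rw [hzy, hws0]
        · exact hwz z fun hzS => hz (Finset.mem_erase.2 ⟨hzy, hzS⟩)
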